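/- Let f : ℤ → ℕ ∪ {∞} be any function such that f⁻¹(0) is a finite set. Then there exist uncountably many asymptotic bases A of the integers such that r_A(n) = f(n) for all integers n and such that A(-x, x) ≫ x^{1/3} for all sufficiently large x, i.e., there is a constant c > 0 with A(-x, x) ≥ c·x^{1/3} for all sufficiently large x. -/

import Mathlib

/-- The representation function of a set `A` of integers:
`r_A(n) = card {(a,b) : a, b ∈ A, a ≤ b, a + b = n}`, valued in `ℕ∞`. -/
noncomputable def repFn (A : Set ℤ) (n : ℤ) : ℕ∞ :=
  {p : ℤ × ℤ | p.1 ∈ A ∧ p.2 ∈ A ∧ p.1 ≤ p.2 ∧ p.1 + p.2 = n}.encard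

/-- The counting function of a set `A` of integers:
`A(y, x) = card {a ∈ A : y ≤ a ≤ x}`. -/
noncomputable def countFn (A : Set ℤ) (y x : ℝ) : ℕ :=
  {a : ℤ | a ∈ A ∧ y ≤ (a : ℝ) ∧ (a : ℝ) ≤ x}.ncard

theorem aux_core (A F G : Finset ℤ) (f : ℤ → ℕ∞) (hF : ∀ n, f n = 0 → n ∈ F)
    (hr : ∀ n, repFn (A : Set ℤ) n ≤ f n) (u : ℤ) (hu : repFn (A : Set ℤ) u < f u)
    (hAG : Disjoint A G) (P : Finset ℤ)
    (hP : ∀ x, (x = 0 ∨ x ∈ A ∨ x ∈ F ∨ x ∈ G) → x ∈ P ∧ -x ∈ P ∧ u + x ∈ P ∧ u - x ∈ P)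
    (b : ℤ) (hb : ∀ x ∈ P, ∀ y ∈ P, ∀ z ∈ P, b ≠ x + y + z ∧ 2 * b ≠ x + y + z ∧ 3 * b ≠ x + y + z) :
    b ∉ A ∧ Disjoint (insert b (insert (u - b) A)) G ∧
    (∀ n, repFn ((insert b (insert (u - b) A) : Finset ℤ) : Set ℤ) n ≤ f n) ∧
    repFn (A : Set ℤ) u < repFn ((insert b (insert (u - b) A) : Finset ℤ) : Set ℤ) u := by
  obtain ⟨z1, z2, z3, z4⟩ := hP 0 (Or.inl rfl)
  simp only [neg_zero, add_zero, sub_zero] at z2 z3 z4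
  have hA : ∀ x ∈ A, x ∈ P ∧ -x ∈ P ∧ u + x ∈ P ∧ u - x ∈ P := fun x hx => hP x (by tauto)
  have hFP : ∀ x ∈ F, x ∈ P ∧ -x ∈ P ∧ u + x ∈ P ∧ u - x ∈ P := fun x hx => hP x (by tauto)
  have hGP : ∀ x ∈ G, x ∈ P ∧ -x ∈ P ∧ u + x ∈ P ∧ u - x ∈ P := fun x hx => hP x (by tauto)
  have h1 : ∀ x ∈ A, ∀ y ∈ A, ∀ z ∈ A, b + x ≠ y + z := by
    intro x hx y hy z hz h
    exact (hb _ (hA x hx).2.1 _ (hA y hy).1 _ (hA z hz).1).1 (by linarith)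
  have h2 : ∀ x ∈ A, ∀ y ∈ A, ∀ z ∈ A, (u - b) + x ≠ y + z := by
    intro x hx y hy z hz h
    exact (hb _ (hA x hx).2.2.1 _ (hA y hy).2.1 _ (hA z hz).2.1).1 (by linarith)
  have h3 : ∀ y ∈ A, ∀ z ∈ A, b + b ≠ y + z := by
    intro y hy z hz h
    exact (hb _ z1 _ (hA y hy).1 _ (hA z hz).1).2.1 (by linarith)
  have h4 : ∀ y ∈ A, ∀ z ∈ A, (u - b) + (u - b) ≠ y + z := by
    intro y hy z hz h
    exact (hb _ z1 _ (hA y hy).2.2.2 _ (hA z hz).2.2.2).2.1 (by linarith)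
  have h5 : b ∉ A := fun h => (hb _ z1 _ z1 _ (hA b h).1).1 (by linarith)
  have h6 : u - b ∉ A := fun h => (hb _ z1 _ z3 _ (hA _ h).2.1).1 (by linarith)
  have h7 : b ≠ u - b := fun h => (hb _ z1 _ z1 _ z3).2.1 (by linarith)
  have h8 : ∀ y ∈ A, ∀ z ∈ A, b + y ≠ (u - b) + z := by
    intro y hy z hz h
    exact (hb _ z3 _ (hA y hy).2.1 _ (hA z hz).1).2.1 (by linarith)
  have h9 : ∀ y ∈ A, b + y ≠ (u - b) + (u - b) := by
    intro y hy h
    exact (hb _ z3 _ z3 _ (hA y hy).2.1).2.2 (by linarith)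
  have h10 : ∀ y ∈ A, (u - b) + y ≠ b + b := by
    intro y hy h
    exact (hb _ z3 _ z1 _ (hA y hy).1).2.2 (by linarith)
  have h11 : ∀ x ∈ A, b + x ∉ F := fun x hx h =>
    (hb _ z1 _ (hFP _ h).1 _ (hA x hx).2.1).1 (by linarith)
  have h12 : ∀ x ∈ A, (u - b) + x ∉ F := fun x hx h =>
    (hb _ z1 _ (hFP _ h).2.1 _ (hA x hx).2.2.1).1 (by linarith)
  have h13 : b + b ∉ F := fun h => (hb _ z1 _ z1 _ (hFP _ h).1).2.1 (by linarith)
  have h14 : (u - b) + (u - b) ∉ F := fun h => (hb _ z3 _ z3 _ (hFP _ h).2.1).2.1 (by linarith)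
  have h15 : b ∉ G := fun h => (hb _ z1 _ z1 _ (hGP _ h).1).1 (by linarith)
  have h16 : u - b ∉ G := fun h => (hb _ z1 _ z1 _ (hGP _ h).2.2.2).1 (by linarith)
  clear hb hP hA hFP hGP z1 z2 z3 z4
  generalize hc : u - b = c at *
  have hbc : b + c = u := by omega
  have hsub : ∀ n, {p : ℤ × ℤ | p.1 ∈ (A : Set ℤ) ∧ p.2 ∈ (A : Set ℤ) ∧ p.1 ≤ p.2 ∧ p.1 + p.2 = n} ⊆ {p : ℤ × ℤ | p.1 ∈ ((insert b (insert c A) : Finset ℤ) : Set ℤ) ∧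
      p.2 ∈ ((insert b (insert c A) : Finset ℤ) : Set ℤ) ∧ p.1 ≤ p.2 ∧ p.1 + p.2 = n} := by
    rintro n ⟨x, y⟩ ⟨hx, hy, h⟩
    refine ⟨?_, ?_, h⟩
    · simp only [Finset.coe_insert, Set.mem_insert_iff]; exact Or.inr (Or.inr hx)
    · simp only [Finset.coe_insert, Set.mem_insert_iff]; exact Or.inr (Or.inr hy)
  have hU : {p : ℤ × ℤ | p.1 ∈ ((insert b (insert c A) : Finset ℤ) : Set ℤ) ∧
      p.2 ∈ ((insert b (insert c A) : Finset ℤ) : Set ℤ) ∧ p.1 ≤ p.2 ∧ p.1 + p.2 = u} =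
      insert (min b c, max b c)
        {p : ℤ × ℤ | p.1 ∈ (A : Set ℤ) ∧ p.2 ∈ (A : Set ℤ) ∧ p.1 ≤ p.2 ∧ p.1 + p.2 = u} := by
    ext ⟨x, y⟩
    simp only [Set.mem_setOf_eq, Finset.coe_insert, Set.mem_insert_iff, Finset.mem_coe, Prod.mk.injEq]
    constructor
    · rintro ⟨hx, hy, hxy, hs⟩
      rcases hx with rfl | rfl | hx <;> rcases hy with rfl | rfl | hy
      · omega
      · left; omega
      · exact absurd (by rwa [show c = y by omega]) h6
      · left; omega
      · omega
      · exact absurd (by rwa [show b = y by omega]) h5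
      · exact absurd (by rwa [show c = x by omega]) h6
      · exact absurd (by rwa [show b = x by omega]) h5
      · right; exact ⟨hx, hy, hxy, hs⟩
    · rintro (⟨rfl, rfl⟩ | ⟨hx, hy, h⟩)
      · refine ⟨?_, ?_, by omega, by omega⟩
        · rcases min_choice b c with h | h <;> rw [h] <;> simp
        · rcases max_choice b c with h | h <;> rw [h] <;> simp
      · exact ⟨Or.inr (Or.inr hx), Or.inr (Or.inr hy), h⟩
  have hnot : (min b c, max b c) ∉
      {p : ℤ × ℤ | p.1 ∈ (A : Set ℤ) ∧ p.2 ∈ (A : Set ℤ) ∧ p.1 ≤ p.2 ∧ p.1 + p.2 = u} := by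
    rintro ⟨h, -⟩
    rcases min_choice b c with h' | h' <;> simp only [h'] at h
    · exact h5 h
    · exact h6 h
  have hUr : repFn ((insert b (insert c A) : Finset ℤ) : Set ℤ) u = repFn (A : Set ℤ) u + 1 := by
    unfold repFn
    rw [hU, Set.encard_insert_of_notMem hnot]
  refine ⟨h5, ?_, ?_, ?_⟩
  · rw [Finset.disjoint_insert_left, Finset.disjoint_insert_left]
    exact ⟨h15, h16, hAG⟩
  · intro n
    by_cases hn : n = u
    · subst hn
      rw [hUr]
      exact Order.add_one_le_of_lt hu
    by_cases hex : ∃ x y, x ∈ insert b (insert c A) ∧ y ∈ insert b (insert c A) ∧ x + y = n ∧ ¬ (x ∈ A ∧ y ∈ A)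
    · obtain ⟨x, y, hx, hy, hs, hxy⟩ := hex
      have hf1 : n ∉ F := by
        simp only [Finset.mem_insert] at hx hy
        grind
      refine le_trans ?_ (ENat.one_le_iff_ne_zero.mpr (fun h => hf1 (hF n h)))
      unfold repFn
      rw [Set.encard_le_one_iff]
      rintro ⟨x1, y1⟩ ⟨x2, y2⟩ ⟨p1, p2, p3, p4⟩ ⟨q1, q2, q3, q4⟩
      have key : ∀ s t, s ≤ t → s ∈ insert b (insert c A) → t ∈ insert b (insert c A) → s + t = n →
          (s = x ∧ t = y) ∨ (s = y ∧ t = x) := by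
        intro s t hst hs ht hn
        simp only [Finset.mem_insert] at hx hy hs ht
        clear hU hsub hnot hUr p1 p2 p3 p4 q1 q2 q3 q4 h11 h12 h13 h14 h15 h16 hF hr
        rcases hx with hx | hx | hx <;> rcases hy with hy | hy | hy <;> rcases hs with hs | hs | hs <;> rcases ht with ht | ht | ht <;> grind
      simp only [Prod.mk.injEq]
      have k1 := key x1 y1 p3 p1 p2 p4
      have k2 := key x2 y2 q3 q1 q2 q4
      simp only at p3 q3
      omega
    · refine le_trans ?_ (hr n)
      unfold repFn
      apply Set.encard_le_encard
      rintro ⟨x, y⟩ ⟨p1, p2, p3, p4⟩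
      by_contra hcon
      apply hex
      refine ⟨x, y, p1, p2, p4, fun h => hcon ⟨h.1, h.2, p3, p4⟩⟩
  · rw [hUr]
    exact ENat.lt_add_one_iff hu.ne_top |>.mpr le_rfl

theorem aux_choose (P : Finset ℤ) (N : ℕ) (hN : 3 * P.card ^ 3 < N) :
    ∃ b ∈ Finset.Icc (1 : ℤ) N, ∀ x ∈ P, ∀ y ∈ P, ∀ z ∈ P,
      b ≠ x + y + z ∧ 2 * b ≠ x + y + z ∧ 3 * b ≠ x + y + z := by
  classical
  let S : Finset ℤ := (P ×ˢ P ×ˢ P).image (fun p => p.1 + p.2.1 + p.2.2)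
  have hS : S.card ≤ P.card ^ 3 := by
    refine Finset.card_image_le.trans ?_
    simp only [Finset.card_product]
    exact le_of_eq (by ring)
  let B : Finset ℤ := S ∪ (S.image (· / 2) ∪ S.image (· / 3))
  have hB : B.card < (Finset.Icc (1 : ℤ) N).card := by
    have e1 : B.card ≤ S.card + (S.card + S.card) :=
      (Finset.card_union_le _ _).trans (Nat.add_le_add_left ((Finset.card_union_le _ _).trans
        (Nat.add_le_add Finset.card_image_le Finset.card_image_le)) _)
    have e2 : (Finset.Icc (1 : ℤ) N).card = N := by simp
    omega
  obtain ⟨b, hb, hbB⟩ := Finset.exists_mem_notMem_of_card_lt_card hB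
  refine ⟨b, hb, fun x hx y hy z hz => ?_⟩
  have hxyz : x + y + z ∈ S := Finset.mem_image.mpr ⟨(x, y, z), by simp [hx, hy, hz], rfl⟩
  simp only [B, Finset.mem_union, Finset.mem_image, not_or, not_exists, not_and] at hbB
  refine ⟨fun h => hbB.1 (h ▸ hxyz), fun h => hbB.2.1 _ hxyz (by omega),
    fun h => hbB.2.2 _ hxyz (by omega)⟩

/-- The invariant of the greedy construction after `k` steps. -/
def AuxInv (f : ℤ → ℕ∞) (E k : ℕ) (p : Finset ℤ × Finset ℤ) : Prop :=
  p.1.card ≤ 2 * k ∧ p.2.card ≤ k ∧ Disjoint p.1 p.2 ∧ (∀ n, repFn (p.1 : Set ℤ) n ≤ f n) ∧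
  k ≤ (p.1 ∩ Finset.Icc (1 : ℤ) (E * k ^ 3 : ℕ)).card

theorem repFn_mono {A B : Set ℤ} (h : A ⊆ B) (n : ℤ) : repFn A n ≤ repFn B n := by
  unfold repFn
  apply Set.encard_le_encard
  rintro ⟨x, y⟩ ⟨h1, h2, h3⟩
  exact ⟨h h1, h h2, h3⟩

theorem aux_step (f : ℤ → ℕ∞) (F : Finset ℤ) (hF : ∀ n, f n = 0 ↔ n ∈ F) (E : ℕ)
    (hE : E = 3 * (4 * (F.card + 4)) ^ 3 + 1) (k : ℕ) (p : Finset ℤ × Finset ℤ)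
    (hp : AuxInv f E k p) (m : ℤ) (S : Set ℤ) :
    ∃ q : Finset ℤ × Finset ℤ, AuxInv f E (k + 1) q ∧ p.1 ⊆ q.1 ∧ p.2 ⊆ q.2 ∧
      (repFn (p.1 : Set ℤ) m < f m → repFn (p.1 : Set ℤ) m < repFn (q.1 : Set ℤ) m) ∧
      (S.Infinite → ∃ s ∈ S, s ∈ q.2) := by
  classical
  obtain ⟨A, G⟩ := p
  obtain ⟨hA, hG, hd, hr, hk⟩ := hp
  simp only at hA hG hd hr hk ⊢
  -- target
  obtain ⟨u, hu, hum⟩ : ∃ u, repFn (A : Set ℤ) u < f u ∧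
      (repFn (A : Set ℤ) m < f m → u = m) := by
    by_cases h : repFn (A : Set ℤ) m < f m
    · exact ⟨m, h, fun _ => rfl⟩
    · obtain ⟨u, hu⟩ := Infinite.exists_notMem_finset ((A ×ˢ A).image (fun p => p.1 + p.2) ∪ F)
      simp only [Finset.mem_union, not_or] at hu
      refine ⟨u, ?_, fun h' => absurd h' h⟩
      have h0 : repFn (A : Set ℤ) u = 0 := by
        unfold repFn
        rw [Set.encard_eq_zero, Set.eq_empty_iff_forall_notMem]
        rintro ⟨x, y⟩ ⟨hx, hy, -, hs⟩
        exact hu.1 (Finset.mem_image.mpr ⟨(x, y), by simpa using ⟨hx, hy⟩, hs⟩)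
      rw [h0]
      exact pos_iff_ne_zero.mpr (fun h => hu.2 ((hF u).1 h))
  -- forbidden element
  obtain ⟨G', hGG, hG', hd', hS⟩ : ∃ G' : Finset ℤ, G ⊆ G' ∧ G'.card ≤ k + 1 ∧ Disjoint A G' ∧
      (S.Infinite → ∃ s ∈ S, s ∈ G') := by
    by_cases h : S.Infinite
    · obtain ⟨s, hs, hsA⟩ := h.exists_notMem_finset A
      refine ⟨insert s G, Finset.subset_insert _ _, (Finset.card_insert_le _ _).trans (by omega), ?_,
        fun _ => ⟨s, hs, Finset.mem_insert_self _ _⟩⟩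
      rw [Finset.disjoint_insert_right]
      exact ⟨hsA, hd⟩
    · exact ⟨G, subset_rfl, by omega, hd, fun h' => absurd h' h⟩
  let Q : Finset ℤ := insert 0 (A ∪ (F ∪ G'))
  let P : Finset ℤ := (Q ∪ Q.image (fun x => -x)) ∪ (Q.image (fun x => u + x) ∪ Q.image (fun x => u - x))
  have hQ : Q.card ≤ (F.card + 4) * (k + 1) := by
    have e1 : Q.card ≤ (A.card + (F.card + G'.card)) + 1 :=
      (Finset.card_insert_le _ _).trans (Nat.add_le_add_right ((Finset.card_union_le _ _).trans
        (Nat.add_le_add_left (Finset.card_union_le _ _) _)) _)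
    nlinarith [Nat.zero_le (F.card * k)]
  have hPc : P.card ≤ 4 * (F.card + 4) * (k + 1) := by
    have e1 : P.card ≤ (Q.card + Q.card) + (Q.card + Q.card) :=
      (Finset.card_union_le _ _).trans (Nat.add_le_add ((Finset.card_union_le _ _).trans
        (Nat.add_le_add_left Finset.card_image_le _)) ((Finset.card_union_le _ _).trans
        (Nat.add_le_add Finset.card_image_le Finset.card_image_le)))
    nlinarith
  have hN : 3 * P.card ^ 3 < E * (k + 1) ^ 3 := by
    have e1 : P.card ^ 3 ≤ (4 * (F.card + 4) * (k + 1)) ^ 3 := Nat.pow_le_pow_left hPc 3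
    rw [mul_pow] at e1
    have e2 : 0 < (k + 1) ^ 3 := by positivity
    rw [hE]
    nlinarith
  obtain ⟨b, hbI, hb⟩ := aux_choose P _ hN
  have hPP : ∀ x, (x = 0 ∨ x ∈ A ∨ x ∈ F ∨ x ∈ G') → x ∈ P ∧ -x ∈ P ∧ u + x ∈ P ∧ u - x ∈ P := by
    intro x hx
    have hxQ : x ∈ Q := by simpa [Q] using hx
    simp only [P, Finset.mem_union, Finset.mem_image]
    exact ⟨Or.inl (Or.inl hxQ), Or.inl (Or.inr ⟨x, hxQ, rfl⟩), Or.inr (Or.inl ⟨x, hxQ, rfl⟩),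
      Or.inr (Or.inr ⟨x, hxQ, rfl⟩)⟩
  obtain ⟨r1, r2, r3, r4⟩ := aux_core A F G' f (fun n h => (hF n).1 h) hr u hu hd' P hPP b hb
  refine ⟨(insert b (insert (u - b) A), G'), ⟨?_, hG', r2, r3, ?_⟩, ?_, hGG, ?_, hS⟩
  · have e1 := Finset.card_insert_le b (insert (u - b) A)
    have e2 := Finset.card_insert_le (u - b) A
    simp only
    omega
  · simp only
    have hsub : insert b (A ∩ Finset.Icc (1 : ℤ) (E * k ^ 3 : ℕ)) ⊆
        insert b (insert (u - b) A) ∩ Finset.Icc (1 : ℤ) (E * (k + 1) ^ 3 : ℕ) := by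
      intro x hx
      rw [Finset.mem_insert, Finset.mem_inter] at hx
      rw [Finset.mem_inter, Finset.mem_insert, Finset.mem_insert]
      rcases hx with rfl | ⟨hx, hx'⟩
      · exact ⟨Or.inl rfl, hbI⟩
      · refine ⟨Or.inr (Or.inr hx), ?_⟩
        rw [Finset.mem_Icc] at hx' ⊢
        refine ⟨hx'.1, hx'.2.trans ?_⟩
        exact_mod_cast Nat.mul_le_mul_left E (Nat.pow_le_pow_left (Nat.le_succ k) 3)
    have := Finset.card_le_card hsub
    rw [Finset.card_insert_of_notMem (fun h => r1 (Finset.mem_inter.1 h).1)] at this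
    omega
  · exact (Finset.subset_insert _ _).trans (Finset.subset_insert _ _)
  · intro h
    rw [← hum h]
    exact r4

theorem aux_fin {A : ℕ → Finset ℤ} (hmono : Monotone A) (n : ℤ) (T : Set (ℤ × ℤ)) (hT : T.Finite)
    (hsub : T ⊆ {p : ℤ × ℤ | p.1 ∈ (⋃ k, (A k : Set ℤ)) ∧ p.2 ∈ (⋃ k, (A k : Set ℤ)) ∧ p.1 ≤ p.2 ∧
      p.1 + p.2 = n}) : ∃ k, T.encard ≤ repFn (A k : Set ℤ) n := by
  have : ∃ k, ∀ p ∈ T, p.1 ∈ A k ∧ p.2 ∈ A k := by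
    choose g hg using fun p : T => Set.mem_iUnion.1 (hsub p.2).1
    choose g' hg' using fun p : T => Set.mem_iUnion.1 (hsub p.2).2.1
    have := hT.to_subtype
    obtain ⟨M, hM⟩ := (Set.finite_range g).bddAbove
    obtain ⟨M', hM'⟩ := (Set.finite_range g').bddAbove
    refine ⟨max M M', fun p hp => ⟨?_, ?_⟩⟩
    · exact hmono ((hM ⟨⟨p, hp⟩, rfl⟩).trans (le_max_left _ _)) (hg ⟨p, hp⟩)
    · exact hmono ((hM' ⟨⟨p, hp⟩, rfl⟩).trans (le_max_right _ _)) (hg' ⟨p, hp⟩)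
  obtain ⟨k, hk⟩ := this
  refine ⟨k, Set.encard_le_encard fun p hp => ?_⟩
  exact ⟨(hk p hp).1, (hk p hp).2, (hsub hp).2.2⟩

theorem aux_count (A : Set ℤ) (E : ℕ) (hE : 0 < E)
    (h : ∀ k : ℕ, k ≤ {a : ℤ | a ∈ A ∧ 1 ≤ a ∧ a ≤ (E * k ^ 3 : ℕ)}.ncard) :
    ∃ c : ℝ, 0 < c ∧ ∃ x₀ : ℝ, ∀ x : ℝ, x₀ ≤ x →
          c * x ^ ((1 : ℝ) / 3) ≤ (countFn A (-x) x : ℝ) := by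
  have hE' : (0 : ℝ) < E := by exact_mod_cast hE
  refine ⟨((E : ℝ)⁻¹) ^ ((1 : ℝ) / 3) / 2, by positivity, E, fun x hx => ?_⟩
  have hx0 : 0 < x := hE'.trans_le hx
  set y : ℝ := (x / E) ^ ((1 : ℝ) / 3) with hy
  have hy3 : y ^ 3 = x / E := by
    rw [hy, ← Real.rpow_natCast, ← Real.rpow_mul (by positivity)]
    norm_num
  have hy1 : 1 ≤ y := Real.one_le_rpow ((one_le_div hE').2 hx) (by norm_num)
  have hyx : ((E : ℝ)⁻¹) ^ ((1 : ℝ) / 3) / 2 * x ^ ((1 : ℝ) / 3) = y / 2 := by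
    rw [hy, div_eq_mul_inv x, Real.mul_rpow (by positivity) (by positivity)]
    ring
  rw [hyx]
  have hf1 : (⌊y⌋₊ : ℝ) ≤ y := Nat.floor_le (by linarith)
  have hf2 : y < ⌊y⌋₊ + 1 := Nat.lt_floor_add_one y
  have hf3 : (1 : ℝ) ≤ ⌊y⌋₊ := by exact_mod_cast (Nat.one_le_floor_iff y).2 hy1
  have hEk : ((E * ⌊y⌋₊ ^ 3 : ℕ) : ℝ) ≤ x := by
    push_cast
    calc (E : ℝ) * (⌊y⌋₊ : ℝ) ^ 3 ≤ E * y ^ 3 := by gcongr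
      _ = x := by rw [hy3]; field_simp
  have hle : ⌊y⌋₊ ≤ countFn A (-x) x := by
    refine (h ⌊y⌋₊).trans ?_
    unfold countFn
    apply Set.ncard_le_ncard
    · rintro a ⟨h1, h2, h3⟩
      have h2' : (1 : ℝ) ≤ a := by exact_mod_cast h2
      have h3' : (a : ℝ) ≤ ((E * ⌊y⌋₊ ^ 3 : ℕ) : ℝ) := by exact_mod_cast h3
      exact ⟨h1, by linarith, by linarith⟩
    · apply (Set.finite_Icc (⌈-x⌉) (⌊x⌋)).subset
      rintro a ⟨-, h2, h3⟩
      exact ⟨Int.ceil_le.2 h2, Int.le_floor.2 h3⟩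
  have : (⌊y⌋₊ : ℝ) ≤ countFn A (-x) x := by exact_mod_cast hle
  linarith

theorem stmt_6 (f : ℤ → ℕ∞) (hf : {n : ℤ | f n = 0}.Finite) :
    ¬ {A : Set ℤ |
        {n : ℤ | ¬ 1 ≤ repFn A n}.Finite ∧
        (∀ n : ℤ, repFn A n = f n) ∧
        (∃ c : ℝ, 0 < c ∧ ∃ x₀ : ℝ, ∀ x : ℝ, x₀ ≤ x →
          c * x ^ ((1 : ℝ) / 3) ≤ (countFn A (-x) x : ℝ))}.Countable := by
  classical
  intro hcount
  obtain ⟨S, hS⟩ := Set.countable_iff_exists_subset_range.1 hcount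
  let F : Finset ℤ := hf.toFinset
  have hF : ∀ n, f n = 0 ↔ n ∈ F := by simp [F]
  obtain ⟨E, hE⟩ : ∃ E, E = 3 * (4 * (F.card + 4)) ^ 3 + 1 := ⟨_, rfl⟩
  have hE0 : 0 < E := by omega
  -- each integer is a target infinitely often
  obtain ⟨t, ht⟩ : ∃ t : ℕ → ℤ, ∀ n K, ∃ k, K ≤ k ∧ t k = n := by
    obtain ⟨g, hg⟩ := exists_surjective_nat (ℤ × ℕ)
    refine ⟨fun k => (g k).1, fun n K => ?_⟩
    choose r hr using fun j : ℕ => hg (n, j)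
    have hinj : Function.Injective r := fun i j hij => by
      have := hr i
      rw [hij, hr j] at this
      exact (Prod.mk.inj this).2.symm
    obtain ⟨j, hj⟩ := Infinite.exists_notMem_finset ((Finset.range K).preimage r hinj.injOn)
    simp only [Finset.mem_preimage, Finset.mem_range, not_lt] at hj
    exact ⟨r j, hj, by simp [hr]⟩
  have h0 : AuxInv f E 0 (∅, ∅) := by
    refine ⟨by simp, by simp, by simp, fun n => ?_, by simp⟩
    simp [repFn]
  choose! step hstep using fun (k : ℕ) (p : Finset ℤ × Finset ℤ) (hp : AuxInv f E k p) =>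
    aux_step f F hF E hE k p hp (t k) (S k)
  let s : ℕ → Finset ℤ × Finset ℤ := fun k => Nat.rec (∅, ∅) (fun k p => step k p) k
  have hs : ∀ k, AuxInv f E k (s k) := by
    intro k
    induction k with
    | zero => exact h0
    | succ k ih => exact (hstep k _ ih).1
  have hs' : ∀ k, (s k).1 ⊆ (s (k+1)).1 ∧ (s k).2 ⊆ (s (k+1)).2 ∧
      (repFn ((s k).1 : Set ℤ) (t k) < f (t k) →
        repFn ((s k).1 : Set ℤ) (t k) < repFn ((s (k+1)).1 : Set ℤ) (t k)) ∧
      ((S k).Infinite → ∃ x ∈ S k, x ∈ (s (k+1)).2) := fun k => (hstep k _ (hs k)).2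
  have hm1 : Monotone (fun k => (s k).1) := monotone_nat_of_le_succ fun k => (hs' k).1
  have hm2 : Monotone (fun k => (s k).2) := monotone_nat_of_le_succ fun k => (hs' k).2.1
  set A : Set ℤ := ⋃ k, ((s k).1 : Set ℤ) with hAdef
  have hsubA : ∀ k, ((s k).1 : Set ℤ) ⊆ A := fun k => Set.subset_iUnion (fun k => ((s k).1 : Set ℤ)) k
  have hle : ∀ n, repFn A n ≤ f n := by
    intro n
    by_contra hlt
    rw [not_le] at hlt
    have h1 : f n + 1 ≤ repFn A n := Order.add_one_le_of_lt hlt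
    obtain ⟨T, hT, hTc⟩ := Set.exists_subset_encard_eq h1
    have hfin : T.Finite := by
      rw [← Set.encard_ne_top_iff, hTc]
      simpa using hlt.ne_top
    obtain ⟨k, hk⟩ := aux_fin hm1 n T hfin hT
    rw [hTc] at hk
    have := hk.trans ((hs k).2.2.2.1 n)
    exact absurd this (not_le.2 ((ENat.lt_add_one_iff hlt.ne_top).2 le_rfl))
  have heq : ∀ n, repFn A n = f n := by
    intro n
    refine le_antisymm (hle n) ?_
    by_contra hlt
    rw [not_le] at hlt
    have hfin : {p : ℤ × ℤ | p.1 ∈ A ∧ p.2 ∈ A ∧ p.1 ≤ p.2 ∧ p.1 + p.2 = n}.Finite := by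
      rw [← Set.encard_ne_top_iff]
      exact hlt.ne_top
    obtain ⟨K, hK⟩ := aux_fin hm1 n _ hfin subset_rfl
    obtain ⟨k, hKk, htk⟩ := ht n K
    have e1 : repFn A n ≤ repFn ((s k).1 : Set ℤ) n :=
      hK.trans (repFn_mono (by exact_mod_cast hm1 hKk) n)
    have e2 := repFn_mono (hsubA k) n
    have e3 := repFn_mono (hsubA (k+1)) n
    have e4 := (hs' k).2.2.1
    rw [htk] at e4
    exact absurd (e4 (e2.trans_lt hlt)) (not_lt.2 (e3.trans e1))
  have hcnt : ∀ k : ℕ, k ≤ {a : ℤ | a ∈ A ∧ 1 ≤ a ∧ a ≤ (E * k ^ 3 : ℕ)}.ncard := by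
    intro k
    refine (hs k).2.2.2.2.trans ?_
    rw [← Set.ncard_coe_finset]
    apply Set.ncard_le_ncard
    · intro a ha
      rw [Finset.mem_coe, Finset.mem_inter, Finset.mem_Icc] at ha
      exact ⟨hsubA k ha.1, ha.2⟩
    · exact (Set.finite_Icc (1 : ℤ) (E * k ^ 3 : ℕ)).subset fun a ha => ha.2
  have hinf : A.Infinite := by
    intro hfin
    have h1 := hcnt (A.ncard + 1)
    have h2 := Set.ncard_le_ncard
      (fun a ha => ha.1 : {a : ℤ | a ∈ A ∧ 1 ≤ a ∧ a ≤ (E * (A.ncard + 1) ^ 3 : ℕ)} ⊆ A) hfin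
    omega
  have hmem : A ∈ Set.range S := by
    apply hS
    refine ⟨?_, heq, aux_count A E hE0 hcnt⟩
    refine hf.subset fun n hn => ?_
    simp only [Set.mem_setOf_eq, heq n, ENat.one_le_iff_ne_zero, not_not] at hn
    exact hn
  obtain ⟨k, hk⟩ := hmem
  obtain ⟨x, hx, hxG⟩ := (hs' k).2.2.2 (hk ▸ hinf)
  rw [hk, hAdef, Set.mem_iUnion] at hx
  obtain ⟨j, hj⟩ := hx
  have hd := (hs (max j (k+1))).2.2.1
  exact Finset.disjoint_left.1 hd (hm1 (le_max_left j (k+1)) hj) (hm2 (le_max_right j (k+1)) hxG)
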